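/- Let m : ℝ with m > 1, and let G be a subgroup of SL(2, ℝ) (the special linear group of 2×2 real matrices, with its topology as a topological group) such that G with the subspace topology is discrete. Suppose the matrix diag(m, m⁻¹) (i.e. !![m, 0; 0, m⁻¹]) belongs to G. Then every element A of G that is triangular is in fact diagonal: if A ∈ G satisfies A₁₀ = 0 or A₀₁ = 0, then A₁₀ = 0 and A₀₁ = 0. -/

import Mathlib

open Matrix MatrixGroups

noncomputable instance : TopologicalSpace (SL(2, ℝ)) :=
  TopologicalSpace.induced (fun A => (A : Matrix (Fin 2) (Fin 2) ℝ)) inferInstance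

open Filter Topology in
/-- A sequence in a discrete subgroup of `SL(2, ℝ)` converging to `1` is eventually `1`. -/
theorem eventually_eq_one_of_tendsto_of_discrete (G : Subgroup (SL(2, ℝ)))
    (hG : DiscreteTopology G) (u : ℕ → SL(2, ℝ)) (hu : ∀ n, u n ∈ G)
    (hlim : Tendsto (fun n => (u n : Matrix (Fin 2) (Fin 2) ℝ)) atTop (𝓝 1)) :
    ∀ᶠ n in atTop, u n = 1 := by
  have hSL : Tendsto u atTop (𝓝 1) := by
    rw [nhds_induced, tendsto_comap_iff]
    simpa [Function.comp_def] using hlim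
  have hsub : Tendsto (fun n => (⟨u n, hu n⟩ : G)) atTop (𝓝 1) := by
    rw [nhds_induced, tendsto_comap_iff]
    exact hSL
  rw [nhds_discrete, tendsto_pure] at hsub
  filter_upwards [hsub] with n hn
  exact congrArg Subtype.val hn

/-- If iterated conjugation by `D ∈ G` scales the off-diagonal entries `s, t` of a matrix with unit
diagonal by powers of `r`, `0 < r < 1`, then discreteness of `G` forces `s = t = 0`. -/
theorem offDiag_eq_zero_of_conj_contracts (G : Subgroup (SL(2, ℝ)))
    (hG : DiscreteTopology G) {D U : SL(2, ℝ)} (hD : D ∈ G) (hU : U ∈ G)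
    {r s t : ℝ} (hr0 : 0 < r) (hr1 : r < 1)
    (hconj : ∀ n : ℕ, ((D ^ n * U * (D ^ n)⁻¹ : SL(2, ℝ)) : Matrix (Fin 2) (Fin 2) ℝ) =
      !![1, t * r ^ n; s * r ^ n, 1]) :
    s = 0 ∧ t = 0 := by
  have hpow := tendsto_pow_atTop_nhds_zero_of_lt_one hr0.le hr1
  have hlim : Filter.Tendsto
      (fun n : ℕ => ((D ^ n * U * (D ^ n)⁻¹ : SL(2, ℝ)) : Matrix (Fin 2) (Fin 2) ℝ))
      Filter.atTop (nhds 1) := by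
    simp_rw [hconj]
    refine tendsto_pi_nhds.2 fun i => tendsto_pi_nhds.2 fun j => ?_
    fin_cases i <;> fin_cases j
    · simp
    · simpa using hpow.const_mul t
    · simpa using hpow.const_mul s
    · simp
  obtain ⟨n, hn⟩ := (eventually_eq_one_of_tendsto_of_discrete G hG _
    (fun n => G.mul_mem (G.mul_mem (G.pow_mem hD n) hU) (G.inv_mem (G.pow_mem hD n))) hlim).exists
  have hmat := hconj n
  rw [hn] at hmat
  have h10 := congrFun (congrFun hmat 1) 0
  have h01 := congrFun (congrFun hmat 0) 1
  have hrn := (pow_pos hr0 n).ne'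
  simp [hrn] at h10 h01
  have hrne := hr0.ne'
  tauto

theorem coe_pow_of_coe_eq_diag {D : SL(2, ℝ)} {x y : ℝ}
    (hD : (D : Matrix (Fin 2) (Fin 2) ℝ) = !![x, 0; 0, y]) (n : ℕ) :
    ((D ^ n : SL(2, ℝ)) : Matrix (Fin 2) (Fin 2) ℝ) = !![x ^ n, 0; 0, y ^ n] := by
  induction n with
  | zero => simp [Matrix.one_fin_two]
  | succ n ih =>
    rw [pow_succ]
    change ((D ^ n : SL(2, ℝ)) : Matrix (Fin 2) (Fin 2) ℝ) * (D : Matrix (Fin 2) (Fin 2) ℝ) = _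
    rw [ih, hD]
    simp [pow_succ]

/-- Conjugating by powers of a diagonal matrix with entries `x, x⁻¹`. -/
theorem coe_conj_pow_of_coe_eq_diag {D U : SL(2, ℝ)} {x y s t : ℝ} (hxy : x * y = 1)
    (hD : (D : Matrix (Fin 2) (Fin 2) ℝ) = !![x, 0; 0, y])
    (hU : (U : Matrix (Fin 2) (Fin 2) ℝ) = !![1, t; s, 1]) (n : ℕ) :
    ((D ^ n * U * (D ^ n)⁻¹ : SL(2, ℝ)) : Matrix (Fin 2) (Fin 2) ℝ) =
      !![1, t * (x ^ 2) ^ n; s * (y ^ 2) ^ n, 1] := by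
  have hn : x ^ n * y ^ n = 1 := by rw [← mul_pow, hxy, one_pow]
  change ((D ^ n : SL(2, ℝ)) : Matrix (Fin 2) (Fin 2) ℝ) * (U : Matrix (Fin 2) (Fin 2) ℝ) *
    adjugate ((D ^ n : SL(2, ℝ)) : Matrix (Fin 2) (Fin 2) ℝ) = _
  rw [coe_pow_of_coe_eq_diag hD, hU, Matrix.adjugate_fin_two_of]
  ext i j
  fin_cases i <;> fin_cases j <;> simp [hn, mul_comm (y ^ n) (x ^ n)] <;> ring

theorem stmt_10 (m : ℝ) (hm : 1 < m) (G : Subgroup (SL(2, ℝ)))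
    (hG : DiscreteTopology G)
    (hdiag : ∃ D : SL(2, ℝ), (D : Matrix (Fin 2) (Fin 2) ℝ) = !![m, 0; 0, m⁻¹] ∧ D ∈ G)
    (A : SL(2, ℝ)) (hA : A ∈ G)
    (htri : (A : Matrix (Fin 2) (Fin 2) ℝ) 1 0 = 0 ∨ (A : Matrix (Fin 2) (Fin 2) ℝ) 0 1 = 0) :
    (A : Matrix (Fin 2) (Fin 2) ℝ) 1 0 = 0 ∧ (A : Matrix (Fin 2) (Fin 2) ℝ) 0 1 = 0 := by
  obtain ⟨D, hD, hDG⟩ := hdiag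
  have hm0 : m ≠ 0 := by positivity
  have hinv0 : 0 < m⁻¹ := by positivity
  have hinv1 : m⁻¹ < 1 := inv_lt_one_of_one_lt₀ hm
  have hsq0 : 0 < m⁻¹ ^ 2 := by positivity
  have hsq1 : m⁻¹ ^ 2 < 1 := pow_lt_one₀ hinv0.le hinv1 two_ne_zero
  have hsqm : 1 - m ^ 2 ≠ 0 := by nlinarith
  have hDinv : ((D⁻¹ : SL(2, ℝ)) : Matrix (Fin 2) (Fin 2) ℝ) = !![m⁻¹, 0; 0, m] := by
    change adjugate (D : Matrix (Fin 2) (Fin 2) ℝ) = _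
    rw [hD, Matrix.adjugate_fin_two_of]
    simp
  have hUG : A * D * A⁻¹ * D⁻¹ ∈ G :=
    G.mul_mem (G.mul_mem (G.mul_mem hA hDG) (G.inv_mem hA)) (G.inv_mem hDG)
  have hdet := A.det_coe
  obtain ⟨a, b, c, d, hAeq⟩ : ∃ a b c d : ℝ,
      (A : Matrix (Fin 2) (Fin 2) ℝ) = !![a, b; c, d] := ⟨_, _, _, _, Matrix.eta_fin_two _⟩
  have hU : ((A * D * A⁻¹ * D⁻¹ : SL(2, ℝ)) : Matrix (Fin 2) (Fin 2) ℝ) =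
      !![a, b; c, d] * !![m, 0; 0, m⁻¹] * !![d, -b; -c, a] * !![m⁻¹, 0; 0, m] := by
    change (A : Matrix (Fin 2) (Fin 2) ℝ) * (D : Matrix (Fin 2) (Fin 2) ℝ) *
      adjugate (A : Matrix (Fin 2) (Fin 2) ℝ) * ((D⁻¹ : SL(2, ℝ)) : Matrix (Fin 2) (Fin 2) ℝ) = _
    rw [hDinv, hAeq, hD, Matrix.adjugate_fin_two_of]
  rw [hAeq, Matrix.det_fin_two_of] at hdet
  rw [hAeq] at htri ⊢
  simp only [Matrix.of_apply, Matrix.cons_val', Matrix.cons_val_zero, Matrix.cons_val_one,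
    Matrix.cons_val_fin_one] at htri ⊢
  rcases htri with rfl | rfl
  · have had : a * d = 1 := by linarith
    have hU' : ((A * D * A⁻¹ * D⁻¹ : SL(2, ℝ)) : Matrix (Fin 2) (Fin 2) ℝ) =
        !![1, a * b * (1 - m ^ 2); 0, 1] := by
      rw [hU]
      ext i j
      fin_cases i <;> fin_cases j <;> simp <;> grind
    have ht := (offDiag_eq_zero_of_conj_contracts G hG (s := 0) (t := a * b * (1 - m ^ 2)) (G.inv_mem hDG) hUG hsq0 hsq1
      fun n => by
        rw [coe_conj_pow_of_coe_eq_diag (inv_mul_cancel₀ hm0) hDinv hU' n]; simp).2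
    have ha : a ≠ 0 := left_ne_zero_of_mul_eq_one had
    simpa [ha, hsqm] using ht
  · have had : a * d = 1 := by linarith
    have hU' : ((A * D * A⁻¹ * D⁻¹ : SL(2, ℝ)) : Matrix (Fin 2) (Fin 2) ℝ) =
        !![1, 0; c * d * (1 - m⁻¹ ^ 2), 1] := by
      rw [hU]
      ext i j
      fin_cases i <;> fin_cases j <;> simp <;> grind
    have hs := (offDiag_eq_zero_of_conj_contracts G hG (s := c * d * (1 - m⁻¹ ^ 2)) (t := 0) hDG hUG hsq0 hsq1
      fun n => by
        rw [coe_conj_pow_of_coe_eq_diag (mul_inv_cancel₀ hm0) hD hU' n]; simp).1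
    have hd : d ≠ 0 := right_ne_zero_of_mul_eq_one had
    have hsqm' : 1 - m⁻¹ ^ 2 ≠ 0 := by linarith
    have hc := (mul_eq_zero.1 hs).resolve_right hsqm'
    simpa [hd] using hc
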